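/- In the symmetric group on the n×n array positions with n ≥ 10, for 3 ≤ i,j ≤ n define X_{ij} = π_{i,j} π_{i−1,j} π_{i−2,j} π_{i−1,j} and Y_{ij} = X_{i,j} X_{i,j−1} X_{i,j−2} X_{i,j−1} (products applied left to right). Then Y_{ij} is the permutation that transposes the (i,j)-element with the (1,1)-element and transposes the (i,1)-element with the (1,j)-element, fixing all other elements. -/

import Mathlib

/-- Rotation of the upper-left `r × s` rectangle (1-based coordinates). -/
def upperLeftRot (r s : ℕ) (p : ℕ × ℕ) : ℕ × ℕ :=
  if p.1 ≤ r ∧ p.2 ≤ s then (r + 1 - p.1, s + 1 - p.2) else p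

/-- `X_{ij} = π_{i,j} π_{i-1,j} π_{i-2,j} π_{i-1,j}` (applied left to right). -/
def Xword (i j : ℕ) (p : ℕ × ℕ) : ℕ × ℕ :=
  upperLeftRot (i - 1) j (upperLeftRot (i - 2) j (upperLeftRot (i - 1) j (upperLeftRot i j p)))

/-- `Y_{ij} = X_{i,j} X_{i,j-1} X_{i,j-2} X_{i,j-1}` (applied left to right). -/
def Yword (i j : ℕ) (p : ℕ × ℕ) : ℕ × ℕ :=
  Xword i (j - 1) (Xword i (j - 2) (Xword i (j - 1) (Xword i j p)))

/-!
The words `X` and `Y` are the same word `T k, T (k-1), T (k-2), T (k-1)`, formed first in the number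
of rows and then in the number of columns. In both cases there are two parallel lines such that
`T k` exchanges their initial segments of length `k`, reversing them. Composing two consecutive such
maps shifts positions by one, so in the word the shifts cancel strictly between `1` and `k`; only
the two ends `1` and `k` are interchanged, across the lines. For `X` the lines are the columns `s`
and `j + 1 - s`, so `X` itself exchanges and reverses initial segments of the rows `1` and `i`.
These rows are the lines for `Y`.
-/

/-- The word `T k, T (k-1), T (k-2), T (k-1)` in a family of maps, applied left to right: the common
shape of `Xword` and `Yword`. -/
def reflectionWord {α : Type*} (T : ℕ → α → α) (k : ℕ) (x : α) : α :=
  T (k - 1) (T (k - 2) (T (k - 1) (T k x)))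

/-- The maps `T k` reflect the line `p` onto the line `q`: `T k` carries the first `k` points of `p`
to those of `q` in reverse order and fixes the later points of `p`. Lines are indexed from `1`, and
their value at `0` is ignored. -/
def ReflectsOnto {α : Type*} (T : ℕ → α → α) (p q : ℕ → α) : Prop :=
  ∀ k t, 1 ≤ t → T k (p t) = if t ≤ k then q (k + 1 - t) else p t

section ReflectionWord

variable {α : Type*} {T : ℕ → α → α} {p q : ℕ → α} {k t u : ℕ}

theorem ReflectsOnto.apply_of_add_eq (h : ReflectsOnto T p q) (ht : 1 ≤ t) (hu : 1 ≤ u)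
    (htu : t + u = k + 1) : T k (p t) = q u := by
  rw [h k t ht, if_pos (by lia), ← htu, Nat.add_sub_cancel_left]

theorem ReflectsOnto.apply_of_lt (h : ReflectsOnto T p q) (ht : 1 ≤ t) (hkt : k < t) :
    T k (p t) = p t := by
  rw [h k t ht, if_neg hkt.not_ge]

theorem reflectionWord_of_fixed {x : α} (h : ∀ m, T m x = x) : reflectionWord T k x = x := by
  simp only [reflectionWord, h]

theorem reflectionWord_first (hpq : ReflectsOnto T p q) (hqp : ReflectsOnto T q p) (hk : 1 ≤ k) :
    reflectionWord T k (p 1) = q k := by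
  rw [reflectionWord, hpq.apply_of_add_eq (u := k) le_rfl hk (by lia),
    hqp.apply_of_lt hk (by lia), hqp.apply_of_lt hk (by lia), hqp.apply_of_lt hk (by lia)]

theorem reflectionWord_last (hpq : ReflectsOnto T p q) (hqp : ReflectsOnto T q p) (hk : 2 ≤ k) :
    reflectionWord T k (p k) = q 1 := by
  rw [reflectionWord, hpq.apply_of_add_eq (u := 1) (by lia) le_rfl rfl,
    hqp.apply_of_add_eq (u := k - 1) le_rfl (by lia) (by lia),
    hpq.apply_of_lt (by lia) (by lia),
    hpq.apply_of_add_eq (u := 1) (by lia) le_rfl (by lia)]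

theorem reflectionWord_between (hpq : ReflectsOnto T p q) (hqp : ReflectsOnto T q p) (ht : 1 < t)
    (htk : t < k) : reflectionWord T k (p t) = p t := by
  rw [reflectionWord, hpq.apply_of_add_eq (u := k + 1 - t) (by lia) (by lia) (by lia),
    hqp.apply_of_add_eq (u := t - 1) (by lia) (by lia) (by lia),
    hpq.apply_of_add_eq (u := k - t) (by lia) (by lia) (by lia),
    hqp.apply_of_add_eq (u := t) (by lia) (by lia) (by lia)]

theorem reflectionWord_of_lt (hpq : ReflectsOnto T p q) (ht : 1 ≤ t) (hkt : k < t) :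
    reflectionWord T k (p t) = p t := by
  rw [reflectionWord, hpq.apply_of_lt ht hkt, hpq.apply_of_lt ht (by lia),
    hpq.apply_of_lt ht (by lia), hpq.apply_of_lt ht (by lia)]

theorem reflectionWord_apply (hpq : ReflectsOnto T p q) (hqp : ReflectsOnto T q p) (hk : 1 ≤ k)
    (ht : 1 ≤ t) :
    reflectionWord T k (p t) = if t = 1 then q k else if t = k then q 1 else p t := by
  split_ifs with h_first h_last
  · rw [h_first, reflectionWord_first hpq hqp hk]
  · rw [h_last, reflectionWord_last hpq hqp (by lia)]
  · rcases lt_or_ge k t with hkt | htk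
    · exact reflectionWord_of_lt hpq ht hkt
    · exact reflectionWord_between hpq hqp (by lia) (by lia)

end ReflectionWord

section Rectangle

variable {i j r s : ℕ}

theorem Xword_eq_reflectionWord (i j : ℕ) :
    Xword i j = reflectionWord (fun k ↦ upperLeftRot k j) i :=
  rfl

theorem Yword_eq_reflectionWord (i j : ℕ) : Yword i j = reflectionWord (Xword i) j :=
  rfl

theorem reflectsOnto_upperLeftRot (hsj : s ≤ j) :
    ReflectsOnto (fun k ↦ upperLeftRot k j) (fun t ↦ (t, s)) (fun t ↦ (t, j + 1 - s)) := by
  intro k t _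
  simp only [upperLeftRot, hsj, and_true]

theorem upperLeftRot_of_lt (hjs : j < s) (k : ℕ) : upperLeftRot k j (r, s) = (r, s) :=
  if_neg fun h ↦ hjs.not_ge h.2

theorem Xword_of_le (hi : 1 ≤ i) (hr : 1 ≤ r) (hs : 1 ≤ s) (hsj : s ≤ j) :
    Xword i j (r, s) =
      if r = 1 then (i, j + 1 - s) else if r = i then (1, j + 1 - s) else (r, s) := by
  have forth := reflectsOnto_upperLeftRot hsj
  have back := reflectsOnto_upperLeftRot (s := j + 1 - s) (j := j) (by lia)
  rw [Nat.sub_sub_self (by lia : s ≤ j + 1)] at back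
  rw [Xword_eq_reflectionWord]
  exact reflectionWord_apply forth back hi hr

theorem Xword_of_lt (hjs : j < s) : Xword i j (r, s) = (r, s) := by
  rw [Xword_eq_reflectionWord]
  exact reflectionWord_of_fixed (upperLeftRot_of_lt hjs)

theorem Xword_of_ne (hi : 1 ≤ i) (hr : 1 ≤ r) (hs : 1 ≤ s) (hr_one : r ≠ 1) (hri : r ≠ i) (j : ℕ) :
    Xword i j (r, s) = (r, s) := by
  rcases lt_or_ge j s with hjs | hsj
  · exact Xword_of_lt hjs
  · rw [Xword_of_le hi hr hs hsj, if_neg hr_one, if_neg hri]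

theorem reflectsOnto_Xword_row_one (hi : 1 ≤ i) :
    ReflectsOnto (Xword i) (fun t ↦ (1, t)) (fun t ↦ (i, t)) := by
  intro k t ht
  split_ifs with htk
  · rw [Xword_of_le hi le_rfl ht htk, if_pos rfl]
  · exact Xword_of_lt (not_le.mp htk)

theorem reflectsOnto_Xword_row_last (hi : 1 ≤ i) :
    ReflectsOnto (Xword i) (fun t ↦ (i, t)) (fun t ↦ (1, t)) := by
  intro k t ht
  split_ifs with htk
  · rw [Xword_of_le hi hi ht htk, if_pos (rfl : i = i), ite_eq_right_iff]
    rintro rfl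
    rfl
  · exact Xword_of_lt (not_le.mp htk)

theorem Yword_row_one (hi : 1 ≤ i) (hj : 1 ≤ j) (hs : 1 ≤ s) :
    Yword i j (1, s) = if s = 1 then (i, j) else if s = j then (i, 1) else (1, s) := by
  rw [Yword_eq_reflectionWord]
  exact reflectionWord_apply (reflectsOnto_Xword_row_one hi) (reflectsOnto_Xword_row_last hi) hj hs

theorem Yword_row_last (hi : 1 ≤ i) (hj : 1 ≤ j) (hs : 1 ≤ s) :
    Yword i j (i, s) = if s = 1 then (1, j) else if s = j then (1, 1) else (i, s) := by
  rw [Yword_eq_reflectionWord]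
  exact reflectionWord_apply (reflectsOnto_Xword_row_last hi) (reflectsOnto_Xword_row_one hi) hj hs

theorem Yword_of_ne (hi : 1 ≤ i) (hr : 1 ≤ r) (hs : 1 ≤ s) (hr_one : r ≠ 1) (hri : r ≠ i) :
    Yword i j (r, s) = (r, s) := by
  rw [Yword_eq_reflectionWord]
  exact reflectionWord_of_fixed (Xword_of_ne hi hr hs hr_one hri)

theorem Yword_eq_general (hi : 2 ≤ i) (hj : 2 ≤ j) (hr : 1 ≤ r) (hs : 1 ≤ s) :
    Yword i j (r, s) =
      if (r, s) = (i, j) then (1, 1)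
      else if (r, s) = (1, 1) then (i, j)
      else if (r, s) = (i, 1) then (1, j)
      else if (r, s) = (1, j) then (i, 1)
      else (r, s) := by
  have hi_pos : 1 ≤ i := by lia
  have hj_pos : 1 ≤ j := by lia
  rcases eq_or_ne r 1 with rfl | hr_one
  · rw [Yword_row_one hi_pos hj_pos hs]
    grind
  · rcases eq_or_ne r i with rfl | hri
    · rw [Yword_row_last hi_pos hj_pos hs]
      grind
    · rw [Yword_of_ne hi_pos hr hs hr_one hri]
      simp only [Prod.mk.injEq, hr_one, hri, false_and, if_false]

end Rectangle

/-- For `n ≥ 10` and `3 ≤ i,j ≤ n`, `Y_{ij}` transposes `(i,j)` with `(1,1)` and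
`(i,1)` with `(1,j)`, fixing all other positions of the `n × n` array. -/
theorem Yword_eq (n i j : ℕ) (hn : 10 ≤ n) (hi : 3 ≤ i ∧ i ≤ n) (hj : 3 ≤ j ∧ j ≤ n)
    (r s : ℕ) (hr1 : 1 ≤ r) (hrn : r ≤ n) (hs1 : 1 ≤ s) (hsn : s ≤ n) :
    Yword i j (r, s) =
      if (r, s) = (i, j) then (1, 1)
      else if (r, s) = (1, 1) then (i, j)
      else if (r, s) = (i, 1) then (1, j)
      else if (r, s) = (1, j) then (i, 1)
      else (r, s) :=
  Yword_eq_general (by lia) (by lia) hr1 hs1
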